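/- arXiv:2510.13484 — 2 statements merged into one kernel-verified Lean document; each statement's English description precedes it below -/
import Mathlib

section
/- Let n ≥ 4, 3 ≤ r < n − ⌊n/3⌋, 1 ≤ p ≤ n−2, and p+2 ≤ q ≤ n. For each 1 ≤ s ≤ min{p, q−p, r−1}, if min{r−s, q−p, n−q+1} = r−s, then γ_{p,q}^{r,s} is undecomposable in IORD(n,r). -/
/-!
Partial transformations on the chain X_n = {1 < 2 < ... < n}, encoded as
functions `ℕ → Option ℕ` (with `none` meaning "undefined"), composed
left-to-right: `x(αβ) = (xα)β`.
-/

namespace OrientedPT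

noncomputable section
open scoped Classical

/-- A partial transformation, as a partial map on `ℕ`. -/
def PTrans : Type := ℕ → Option ℕ

instance : Mul PTrans := ⟨fun f g x => (f x).bind g⟩

theorem mul_apply (f g : PTrans) (x : ℕ) : (f * g) x = (f x).bind g := rfl

instance : Semigroup PTrans where
  mul_assoc f g h := by
    funext x
    show ((f x).bind g).bind h = (f x).bind (fun y => (g y).bind h)
    cases f x <;> rfl

/-- The domain of a partial transformation. -/
def domSet (f : PTrans) : Set ℕ := {x | f x ≠ none}

/-- The image of a partial transformation. -/
def im (f : PTrans) : Set ℕ := {y | ∃ x, f x = some y}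

/-- The set of fixed points: `fix(α) = {x ∈ dom α : xα = x}`. -/
def fixSet (f : PTrans) : Set ℕ := {x | f x = some x}

/-- The value of `f` at `x` (defaulting to `0` off the domain). -/
def val (f : PTrans) (x : ℕ) : ℕ := (f x).getD 0

/-- `f` is a partial transformation on `X_n = {1,…,n}`. -/
def IsPT (n : ℕ) (f : PTrans) : Prop :=
  domSet f ⊆ Set.Icc 1 n ∧ im f ⊆ Set.Icc 1 n

/-- Order-decreasing: `xα ≤ x` for all `x ∈ dom α`. -/
def OrderDecr (f : PTrans) : Prop := ∀ x y, f x = some y → y ≤ x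

/-- Order-preserving. -/
def OrderPres (f : PTrans) : Prop :=
  ∀ x y u v, f x = some u → f y = some v → x ≤ y → u ≤ v

/-- Order-reversing. -/
def OrderRev (f : PTrans) : Prop :=
  ∀ x y u v, f x = some u → f y = some v → x ≤ y → v ≤ u

/-- Monotone: order-preserving or order-reversing. -/
def IsMonotone (f : PTrans) : Prop := OrderPres f ∨ OrderRev f

/-- Injectivity of a partial transformation. -/
def Inj (f : PTrans) : Prop := ∀ x y z, f x = some z → f y = some z → x = y

/-- The cyclic successor of `a` in the set `D`: the least element of `D`
above `a` if there is one, and otherwise the least element of `D`. -/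
def cycSucc (D : Set ℕ) (a : ℕ) : ℕ :=
  if {x ∈ D | a < x}.Nonempty then sInf {x ∈ D | a < x} else sInf D

/-- The cyclic descents of `f`: those `a ∈ dom f` whose cyclic successor in
`dom f` has a strictly smaller value. Writing `dom f = {x₁ < ⋯ < x_t}` these
are exactly the indices `1 ≤ i ≤ t` with `x_{i+1}α < x_iα` (where `x_{t+1} = x₁`). -/
def descents (f : PTrans) : Set ℕ :=
  {a ∈ domSet f | val f (cycSucc (domSet f) a) < val f a}

/-- The cyclic ascents of `f`. -/
def ascents (f : PTrans) : Set ℕ :=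
  {a ∈ domSet f | val f a < val f (cycSucc (domSet f) a)}

/-- Orientation-preserving: at most one cyclic descent. -/
def OrientPres (f : PTrans) : Prop := (descents f).ncard ≤ 1

/-- Orientation-reversing: at most one cyclic ascent. -/
def OrientRev (f : PTrans) : Prop := (ascents f).ncard ≤ 1

/-- Oriented: orientation-preserving or orientation-reversing. -/
def Oriented (f : PTrans) : Prop := OrientPres f ∨ OrientRev f

/-- `PORD n`: all oriented and order-decreasing partial transformations on `X_n`. -/
def PORD (n : ℕ) : Set PTrans := {f | IsPT n f ∧ Oriented f ∧ OrderDecr f}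

/-- `PORD(n,r) = {α ∈ PORD_n : |im α| ≤ r}`. -/
def PORDr (n r : ℕ) : Set PTrans := {f ∈ PORD n | (im f).ncard ≤ r}

/-- `POPD n`: the orientation-preserving elements of `PORD n`. -/
def POPD (n : ℕ) : Set PTrans := {f ∈ PORD n | OrientPres f}

/-- `PORD_n^* = PORD_n \ POPD_n`. -/
def PORDstar (n : ℕ) : Set PTrans := PORD n \ POPD n

/-- `PMD n`: monotone and order-decreasing partial transformations on `X_n`. -/
def PMD (n : ℕ) : Set PTrans := {f | IsPT n f ∧ IsMonotone f ∧ OrderDecr f}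

/-- `PRD_n^* = PORD_n^* \ PMD_n`. -/
def PRDstar (n : ℕ) : Set PTrans := PORDstar n \ PMD n

/-- `IORD n`: the injective elements of `PORD n`. -/
def IORD (n : ℕ) : Set PTrans := {f ∈ PORD n | Inj f}

/-- `IORD(n,r) = {α ∈ IORD_n : |im α| ≤ r}`. -/
def IORDr (n r : ℕ) : Set PTrans := {f ∈ IORD n | (im f).ncard ≤ r}

/-- `A` is a generating set of `S`: `A ⊆ S` and the smallest subsemigroup
containing `A` is `S`. -/
def IsGenSet (S A : Set PTrans) : Prop :=
  A ⊆ S ∧ (Subsemigroup.closure A : Set PTrans) = S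

/-- A minimal generating set: a generating set of minimum cardinality. -/
def IsMinGenSet (S A : Set PTrans) : Prop :=
  IsGenSet S A ∧ ∀ B : Set PTrans, IsGenSet S B → A.ncard ≤ B.ncard

/-- The rank of `S`: the minimum cardinality of a generating set of `S`. -/
def rank (S : Set PTrans) : ℕ :=
  sInf {k | ∃ A : Set PTrans, IsGenSet S A ∧ A.ncard = k}

/-- `z` is undecomposable in `S`: `z = xy` with `x, y ∈ S` forces `z = x` or `z = y`. -/
def Undecomposable (S : Set PTrans) (z : PTrans) : Prop :=
  ∀ x ∈ S, ∀ y ∈ S, z = x * y → z = x ∨ z = y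

/-- `T` is a subsemigroup of (the semigroup given by the subset) `S`. -/
def IsSubsemigroupOf (T S : Set PTrans) : Prop :=
  T ⊆ S ∧ ∀ a ∈ T, ∀ b ∈ T, a * b ∈ T

/-- `T` is a maximal subsemigroup of `S`: a maximal element, under inclusion,
of the family of proper subsemigroups of `S`. -/
def IsMaximalSubsemigroup (S T : Set PTrans) : Prop :=
  IsSubsemigroupOf T S ∧ T ≠ S ∧
    ∀ U : Set PTrans, IsSubsemigroupOf U S → U ≠ S → T ⊆ U → T = U

/-- The restriction of `f` to `Y`. -/
def restrict (f : PTrans) (Y : Set ℕ) : PTrans :=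
  fun x => if x ∈ Y then f x else none

/-- The partial identity `1_Y` on `Y`. -/
def partialId (Y : Set ℕ) : PTrans := fun x => if x ∈ Y then some x else none

/-- `ξ_{p,q}`: domain `[p, q+1]`, fixes every point of `[p,q]`, maps `q+1` to `p`. -/
def xi (p q : ℕ) : PTrans := fun x =>
  if p ≤ x ∧ x ≤ q then some x else if x = q + 1 then some p else none

/-- `γ_{p,q}` (for `1 ≤ p ≤ q−2 ≤ n−2`): with `k = min(p−1, q−p−1)` and
`l = min(q−p−1, n−q)`, it has domain `[p, p+k] ∪ [q, q+l]` and maps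
`p+i ↦ p−i` and `q+j ↦ q−j`. -/
def gamma (n p q : ℕ) : PTrans := fun x =>
  if p ≤ x ∧ x ≤ p + min (p - 1) (q - p - 1) then some (2 * p - x)
  else if q ≤ x ∧ x ≤ q + min (q - p - 1) (n - q) then some (2 * q - x)
  else none

/-- `γ_{p,q}^{r,s}`: with `u = min(r−s, q−p, n−q+1)`, it has domain
`[p, p+s−1] ∪ [q, q+u−1]` and maps `p+i ↦ p−i` and `q+j ↦ q−j`. -/
def gammaRS (n r p q s : ℕ) : PTrans := fun x =>
  if p ≤ x ∧ x + 1 ≤ p + s then some (2 * p - x)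
  else if q ≤ x ∧ x + 1 ≤ q + min (r - s) (min (q - p) (n - q + 1)) then some (2 * q - x)
  else none

/-- `δ^a_Y`: domain `Y ∪ {a}`, fixes every point of `Y`, maps `a` to `a−1`. -/
def deltaMap (a : ℕ) (Y : Set ℕ) : PTrans :=
  fun x => if x ∈ Y then some x else if x = a then some (a - 1) else none

/-- `ζ_Z`: with `a = max Z` and `b = min Z`, domain `Z ∪ {a+1}`, fixes every
point of `Z`, maps `a+1` to `b−1`. -/
def zetaMap (Z : Set ℕ) : PTrans :=
  fun x => if x ∈ Z then some x else if x = sSup Z + 1 then some (sInf Z - 1) else none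

/-- `E_r`: the idempotents of `PORD_n` with image of size exactly `r`. -/
def Eset (n r : ℕ) : Set PTrans := {f ∈ PORD n | f * f = f ∧ (im f).ncard = r}

/-- `F_r = {ξ_{p,q}^r : 1 ≤ p ≤ n−2, p+1 ≤ q ≤ p+r−2 ≤ n−1}`. -/
def Fset (n r : ℕ) : Set PTrans :=
  {f | ∃ p q : ℕ, 1 ≤ p ∧ p + 2 ≤ n ∧ p + 1 ≤ q ∧ q + 2 ≤ p + r ∧ p + r ≤ n + 1 ∧
    f = xi p q}

/-- `G_n = {γ_{p,q} : 1 ≤ p ≤ q−2 ≤ n−2} \ {γ_{1,n}}`. -/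
def Gset (n : ℕ) : Set PTrans :=
  {f | ∃ p q : ℕ, 1 ≤ p ∧ p + 2 ≤ q ∧ q ≤ n ∧ f = gamma n p q} \ {gamma n 1 n}

/-- `H_n^r = {γ_{p,q}^{r,s} : 1 ≤ p ≤ q−2 ≤ n−2, 1 ≤ s ≤ min{p, q−p, r−1}, (q,s) ≠ (n,1)}`. -/
def Hset (n r : ℕ) : Set PTrans :=
  {f | ∃ p q s : ℕ, 1 ≤ p ∧ p + 2 ≤ q ∧ q ≤ n ∧ 1 ≤ s ∧
    s ≤ min p (min (q - p) (r - 1)) ∧ ¬(q = n ∧ s = 1) ∧ f = gammaRS n r p q s}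

/-- `EI_r = {1_Y : Y ⊆ X_n, |Y| = r}`. -/
def EIset (n r : ℕ) : Set PTrans :=
  {f | ∃ Y : Set ℕ, Y ⊆ Set.Icc 1 n ∧ Y.ncard = r ∧ f = partialId Y}

/-- `FI_r = {δ^a_Y : 2 ≤ a ≤ n, Y ⊆ X_n \ {a−1,a}, |Y| = r−1}`. -/
def FIset (n r : ℕ) : Set PTrans :=
  {f | ∃ (a : ℕ) (Y : Set ℕ), 2 ≤ a ∧ a ≤ n ∧ Y ⊆ Set.Icc 1 n \ {a - 1, a} ∧
    Y.ncard = r - 1 ∧ f = deltaMap a Y}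

/-- `GI_k = {ζ_Z : Z ⊆ X_n \ {1,n}, |Z| = k−1}`. -/
def GIset (n k : ℕ) : Set PTrans :=
  {f | ∃ Z : Set ℕ, Z ⊆ Set.Icc 1 n \ {1, n} ∧ Z.ncard = k - 1 ∧ f = zetaMap Z}

/-- `GI_k^c`: those `ζ_Z ∈ GI_k` with `Z` a convex subset (an interval). -/
def GIcset (n k : ℕ) : Set PTrans :=
  {f | ∃ Z : Set ℕ, Z ⊆ Set.Icc 1 n \ {1, n} ∧ Z.ncard = k - 1 ∧ Z.OrdConnected ∧
    f = zetaMap Z}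

/-- `F^r_{p,q} = {α ∈ PORD(n,r) : α restricted to [p, q+1] equals ξ_{p,q}^r}`. -/
def Frestr (n r p q : ℕ) : Set PTrans :=
  {f ∈ PORDr n r | restrict f (Set.Icc p (q + 1)) = xi p q}

/-- `G_{p,q} = {α ∈ PORD^*(n,r) : α restricted to dom(γ_{p,q}) equals γ_{p,q}}`. -/
def Grestr (n r p q : ℕ) : Set PTrans :=
  {f ∈ PORDr n r ∩ PORDstar n | restrict f (domSet (gamma n p q)) = gamma n p q}

/-- `H^{r,s}_{p,q} = {α ∈ PORD^*(n,r) : α restricted to dom(γ^{r,s}_{p,q}) equals γ^{r,s}_{p,q}}`. -/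
def Hrestr (n r p q s : ℕ) : Set PTrans :=
  {f ∈ PORDr n r ∩ PORDstar n |
    restrict f (domSet (gammaRS n r p q s)) = gammaRS n r p q s}

end

end OrientedPT

namespace OrientedPT

/-- The union of the blocks `[p, p+s-1]` and `[q, q+u-1]`. -/
def blocks (p q s u : ℕ) : Set ℕ := Set.Ico p (p + s) ∪ Set.Ico q (q + u)

theorem mem_blocks {p q s u x : ℕ} :
    x ∈ blocks p q s u ↔ (p ≤ x ∧ x < p + s) ∨ (q ≤ x ∧ x < q + u) := Iff.rfl

theorem ncard_blocks {p q s u : ℕ} (h : p + s ≤ q) : (blocks p q s u).ncard = s + u := by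
  rw [blocks, Set.ncard_union_eq _ (Set.finite_Ico _ _) (Set.finite_Ico _ _)]
  · simp [Set.ncard_eq_toFinset_card']
  · rw [Set.disjoint_left]
    rintro x ⟨_, _⟩ ⟨_, _⟩
    omega

theorem apply_eq_some_val {f : PTrans} {x : ℕ} (h : x ∈ domSet f) : f x = some (val f x) := by
  obtain ⟨y, hy⟩ := Option.ne_none_iff_exists'.mp h
  simp [val, hy]

theorem domSet_finite {n r : ℕ} {f : PTrans} (hf : f ∈ IORDr n r) : (domSet f).Finite :=
  (Set.finite_Icc 1 n).subset hf.1.1.1.1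

theorem ncard_domSet_le {n r : ℕ} {f : PTrans} (hf : f ∈ IORDr n r) :
    (domSet f).ncard ≤ r := by
  refine le_trans (Set.ncard_le_ncard_of_injOn (val f) ?_ ?_ ?_) hf.2
  · exact fun x hx => ⟨x, apply_eq_some_val hx⟩
  · intro x hx y hy hxy
    exact hf.1.2 x y _ (apply_eq_some_val hx) (hxy ▸ apply_eq_some_val hy)
  · exact (Set.finite_Icc 1 n).subset hf.1.1.1.2

theorem domSet_eq_of_subset {n r : ℕ} {f : PTrans} (hf : f ∈ IORDr n r) {D : Set ℕ}
    (hD : D ⊆ domSet f) (hr : r ≤ D.ncard) : domSet f = D :=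
  (Set.eq_of_subset_of_ncard_le hD ((ncard_domSet_le hf).trans hr) (domSet_finite hf)).symm

theorem val_ne_val_succ {f : PTrans} (hf : Inj f) {x : ℕ} (hx : x ∈ domSet f)
    (hx' : x + 1 ∈ domSet f) : val f x ≠ val f (x + 1) := fun h => by
  have := hf x (x + 1) _ (apply_eq_some_val hx) (h ▸ apply_eq_some_val hx')
  omega

theorem cycSucc_eq {D : Set ℕ} {a b : ℕ} (hb : b ∈ D) (hab : a < b)
    (h : ∀ x ∈ D, a < x → b ≤ x) : cycSucc D a = b := by
  rw [cycSucc, if_pos ⟨b, hb, hab⟩]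
  exact IsLeast.csInf_eq ⟨⟨hb, hab⟩, fun x hx => h x hx.1 hx.2⟩

theorem cycSucc_eq_of_max {D : Set ℕ} {a b : ℕ} (ha : ∀ x ∈ D, x ≤ a)
    (hb : IsLeast D b) : cycSucc D a = b := by
  rw [cycSucc, if_neg, hb.csInf_eq]
  rintro ⟨x, hx, hax⟩
  exact absurd (ha x hx) (not_le.mpr hax)

/-- If an orientation-reversing injection ascends at `m`, it strictly decreases between
consecutive points of its domain other than `m, m + 1`. -/
theorem val_succ_lt_of_ascent {f : PTrans} (hfin : (domSet f).Finite) (hinj : Inj f)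
    (hrev : OrientRev f) {m x : ℕ} (hm : m ∈ ascents f) (hxm : x ≠ m)
    (hx : x ∈ domSet f) (hx' : x + 1 ∈ domSet f) : val f (x + 1) < val f x := by
  by_contra hlt
  have hne := val_ne_val_succ hinj hx hx'
  have hasc : x ∈ ascents f := by
    refine ⟨hx, ?_⟩
    rw [cycSucc_eq hx' (Nat.lt_succ_self x) fun y _ h => h]
    omega
  exact hxm ((Set.ncard_le_one (hfin.subset fun _ h => h.1)).mp hrev x hasc m hm)

/-- If an orientation-preserving injection descends at `m`, it strictly increases between
consecutive points of its domain other than `m, m + 1`. -/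
theorem val_lt_succ_of_descent {f : PTrans} (hfin : (domSet f).Finite) (hinj : Inj f)
    (hpres : OrientPres f) {m x : ℕ} (hm : m ∈ descents f) (hxm : x ≠ m)
    (hx : x ∈ domSet f) (hx' : x + 1 ∈ domSet f) : val f x < val f (x + 1) := by
  by_contra hlt
  have hne := val_ne_val_succ hinj hx hx'
  have hdesc : x ∈ descents f := by
    refine ⟨hx, ?_⟩
    rw [cycSucc_eq hx' (Nat.lt_succ_self x) fun y _ h => h]
    omega
  exact hxm ((Set.ncard_le_one (hfin.subset fun _ h => h.1)).mp hpres x hdesc m hm)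

theorem add_le_of_step_lt {g : ℕ → ℕ} {a k : ℕ}
    (h : ∀ x, a ≤ x → x + 1 < a + k → g x < g (x + 1)) :
    ∀ i < k, g a + i ≤ g (a + i) := by
  intro i
  induction i with
  | zero => simp
  | succ i ih =>
    intro hi
    have h1 := ih (by omega)
    have h2 := h (a + i) (by omega) (by omega)
    rw [← add_assoc a i 1]
    omega

theorem add_le_of_step_gt {g : ℕ → ℕ} {a k : ℕ}
    (h : ∀ x, a ≤ x → x + 1 < a + k → g (x + 1) < g x) :
    ∀ i < k, g (a + i) + i ≤ g a := by
  intro i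
  induction i with
  | zero => simp
  | succ i ih =>
    intro hi
    have h1 := ih (by omega)
    have h2 := h (a + i) (by omega) (by omega)
    rw [← add_assoc a i 1]
    omega

theorem eq_of_domSet_eq {f g : PTrans} {D : Set ℕ} (hf : domSet f = D) (hg : domSet g = D)
    (h : ∀ x ∈ D, f x = g x) : f = g := by
  funext x
  by_cases hx : x ∈ D
  · exact h x hx
  · rw [not_not.mp fun h' : f x ≠ none => hx (hf ▸ h'),
      not_not.mp fun h' : g x ≠ none => hx (hg ▸ h')]

/-- If `f` is order-decreasing and injective with domain the two blocks, is
orientation-reversing, and lies above the block-wise reflection, then it is that reflection. -/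
theorem val_of_orientRev {f : PTrans} {p q s u : ℕ} (hs : 1 ≤ s) (hu : 1 ≤ u) (hsq : p + s ≤ q)
    (hdom : domSet f = blocks p q s u) (hfin : (domSet f).Finite) (hinj : Inj f)
    (hdecr : ∀ x ∈ domSet f, val f x ≤ x)
    (hp : ∀ i < s, p ≤ val f (p + i) + i) (hq : ∀ j < u, q ≤ val f (q + j) + j)
    (hrev : OrientRev f) :
    (∀ i < s, val f (p + i) + i = p) ∧ ∀ j < u, val f (q + j) + j = q := by
  have mem : ∀ x, x ∈ domSet f ↔ (p ≤ x ∧ x < p + s) ∨ (q ≤ x ∧ x < q + u) := fun x => by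
    rw [hdom, mem_blocks]
  have hm : p + s - 1 ∈ ascents f := by
    have hd : p + s - 1 ∈ domSet f := (mem _).mpr (by omega)
    refine ⟨hd, ?_⟩
    rw [cycSucc_eq (b := q) ((mem _).mpr (by omega)) (by omega)
      fun y hy _ => by have := (mem _).mp hy; omega]
    have h1 := hdecr _ hd
    have h2 := hq 0 (by omega)
    simp only [add_zero] at h2
    omega
  have step : ∀ x, x ≠ p + s - 1 → x ∈ domSet f → x + 1 ∈ domSet f → val f (x + 1) < val f x :=
    fun x h hx hx' => val_succ_lt_of_ascent hfin hinj hrev hm h hx hx'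
  have hp' := hdecr p ((mem _).mpr (by omega))
  have hq' := hdecr q ((mem _).mpr (by omega))
  refine ⟨fun i hi => ?_, fun j hj => ?_⟩
  · have := add_le_of_step_gt (g := val f) (a := p) (k := s) (fun x h1 h2 =>
      step x (by omega) ((mem _).mpr (by omega)) ((mem _).mpr (by omega))) i hi
    have := hp i hi
    omega
  · have := add_le_of_step_gt (g := val f) (a := q) (k := u) (fun x h1 h2 =>
      step x (by omega) ((mem _).mpr (by omega)) ((mem _).mpr (by omega))) j hj
    have := hq j hj
    omega

/-- If `f` is order-decreasing and injective with domain the two blocks, is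
orientation-preserving, and lies above the block-wise reflection, then it is the identity. -/
theorem val_of_orientPres {f : PTrans} {p q s u : ℕ} (hs : 1 ≤ s) (hu : 1 ≤ u) (hsq : p + s ≤ q)
    (hupq : p + u ≤ q)
    (hdom : domSet f = blocks p q s u) (hfin : (domSet f).Finite) (hinj : Inj f)
    (hdecr : ∀ x ∈ domSet f, val f x ≤ x)
    (hp : ∀ i < s, p ≤ val f (p + i) + i) (hq : ∀ j < u, q ≤ val f (q + j) + j)
    (hpres : OrientPres f) : ∀ x ∈ domSet f, val f x = x := by
  have mem : ∀ x, x ∈ domSet f ↔ (p ≤ x ∧ x < p + s) ∨ (q ≤ x ∧ x < q + u) := fun x => by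
    rw [hdom, mem_blocks]
  have hp' := hdecr p ((mem _).mpr (by omega))
  have hm : q + (u - 1) ∈ descents f := by
    refine ⟨(mem _).mpr (by omega), ?_⟩
    rw [cycSucc_eq_of_max (b := p) (fun y hy => by have := (mem _).mp hy; omega)
      ⟨(mem _).mpr (by omega), fun y hy => by have := (mem _).mp hy; omega⟩]
    have := hq (u - 1) (by omega)
    omega
  have step : ∀ x, x ≠ q + (u - 1) → x ∈ domSet f → x + 1 ∈ domSet f →
      val f x < val f (x + 1) :=
    fun x h hx hx' => val_lt_succ_of_descent hfin hinj hpres hm h hx hx'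
  have hp0 := hp 0 (by omega)
  have hq0 := hq 0 (by omega)
  simp only [add_zero] at hp0 hq0
  intro x hx
  have hle := hdecr x hx
  rcases (mem x).mp hx with h | h
  · have := add_le_of_step_lt (g := val f) (a := p) (k := s) (fun x h1 h2 =>
      step x (by omega) ((mem _).mpr (by omega)) ((mem _).mpr (by omega))) (x - p) (by omega)
    rw [Nat.add_sub_cancel' h.1] at this
    omega
  · have := add_le_of_step_lt (g := val f) (a := q) (k := u) (fun x h1 h2 =>
      step x (by omega) ((mem _).mpr (by omega)) ((mem _).mpr (by omega))) (x - q) (by omega)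
    rw [Nat.add_sub_cancel' h.1] at this
    omega

section gammaRS

variable {n r p q s : ℕ}

theorem gammaRS_apply_left {i : ℕ} (hi : i < s) :
    gammaRS n r p q s (p + i) = some (p - i) := by
  rw [gammaRS, if_pos (by omega)]
  congr 1
  omega

theorem gammaRS_apply_right (hsq : p + s ≤ q)
    (hmin : min (r - s) (min (q - p) (n - q + 1)) = r - s) {j : ℕ} (hj : j < r - s) :
    gammaRS n r p q s (q + j) = some (q - j) := by
  rw [gammaRS, hmin, if_neg (by omega), if_pos (by omega)]
  congr 1
  omega

theorem domSet_gammaRS (hmin : min (r - s) (min (q - p) (n - q + 1)) = r - s) :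
    domSet (gammaRS n r p q s) = blocks p q s (r - s) := by
  ext x
  rw [mem_blocks, domSet, Set.mem_ofPred_eq, gammaRS, hmin]
  split_ifs <;> simp <;> omega

end gammaRS

end OrientedPT

open OrientedPT in
/-- For `n ≥ 4`, `3 ≤ r < n − ⌊n/3⌋`, `1 ≤ p ≤ n−2`,
`p+2 ≤ q ≤ n` and `1 ≤ s ≤ min{p, q−p, r−1}`: if
`min{r−s, q−p, n−q+1} = r−s`, then `γ_{p,q}^{r,s}` is undecomposable in
`IORD(n,r)`. -/
theorem gammaRS_undecomposable (n r p q s : ℕ) (hn : 4 ≤ n) (hr1 : 3 ≤ r)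
    (hr2 : r < n - n / 3) (hp : 1 ≤ p) (hpn : p + 2 ≤ n) (hq1 : p + 2 ≤ q)
    (hq2 : q ≤ n) (hs1 : 1 ≤ s) (hs2 : s ≤ min p (min (q - p) (r - 1)))
    (hmin : min (r - s) (min (q - p) (n - q + 1)) = r - s) :
    Undecomposable (IORDr n r) (gammaRS n r p q s) := by
  intro α hα β hβ hγ
  have hsq : p + s ≤ q := by omega
  have hu : 1 ≤ r - s := by omega
  have hupq : p + (r - s) ≤ q := by omega
  have hcard : (blocks p q s (r - s)).ncard = r := by
    rw [ncard_blocks hsq]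
    omega
  have hdγ := domSet_gammaRS hmin
  have happ : ∀ x, gammaRS n r p q s x = (α x).bind β := fun x => by rw [hγ, mul_apply]
  have hdα : domSet α = blocks p q s (r - s) := by
    refine domSet_eq_of_subset hα (fun x hx hnone => ?_) hcard.ge
    rw [← hdγ] at hx
    exact hx (by rw [happ, hnone]; rfl)
  have hle : ∀ x y, gammaRS n r p q s x = some y → y ≤ val α x := by
    intro x y hxy
    rw [happ] at hxy
    obtain ⟨z, hz, hzy⟩ := Option.bind_eq_some_iff.mp hxy
    have := hβ.1.1.2.2 z y hzy
    simpa [val, hz] using this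
  have hp' : ∀ i < s, p ≤ val α (p + i) + i := fun i hi => by
    have := hle _ _ (gammaRS_apply_left hi)
    omega
  have hq' : ∀ j < r - s, q ≤ val α (q + j) + j := fun j hj => by
    have := hle _ _ (gammaRS_apply_right hsq hmin hj)
    omega
  have hdecr : ∀ x ∈ domSet α, val α x ≤ x := fun x hx =>
    hα.1.1.2.2 x _ (apply_eq_some_val hx)
  rcases hα.1.1.2.1 with hpres | hrev
  · right
    have hid := val_of_orientPres hs1 hu hsq hupq hdα (domSet_finite hα) hα.1.2 hdecr hp' hq' hpres
    have heq : ∀ x ∈ blocks p q s (r - s), gammaRS n r p q s x = β x := fun x hx => by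
      rw [← hdα] at hx
      rw [happ, apply_eq_some_val hx, hid x hx]
      rfl
    have hdβ : domSet β = blocks p q s (r - s) := by
      refine domSet_eq_of_subset hβ (fun x hx hnone => ?_) hcard.ge
      have hx' := heq x hx
      rw [← hdγ] at hx
      exact hx (hx'.trans hnone)
    exact eq_of_domSet_eq hdγ hdβ heq
  · left
    obtain ⟨h1, h2⟩ :=
      val_of_orientRev hs1 hu hsq hdα (domSet_finite hα) hα.1.2 hdecr hp' hq' hrev
    refine eq_of_domSet_eq hdγ hdα fun x hx => ?_
    rw [apply_eq_some_val (f := α) (hdα ▸ hx)]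
    rcases mem_blocks.mp hx with h | h
    · obtain ⟨i, rfl⟩ := Nat.exists_eq_add_of_le h.1
      have := h1 i (by omega)
      rw [gammaRS_apply_left (by omega)]
      congr 1
      omega
    · obtain ⟨j, rfl⟩ := Nat.exists_eq_add_of_le h.1
      have := h2 j (by omega)
      rw [gammaRS_apply_right hsq hmin (by omega)]
      congr 1
      omega
end

section
/- Let n ≥ 4, n − ⌊n/3⌋ ≤ r ≤ n−1, 1 ≤ p ≤ n−2, and p+1 ≤ q ≤ p+r−2 ≤ n−1. Then PORD(n,r) \ F^r_{p,q} is a maximal subsemigroup of PORD(n,r). -/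
namespace OrientedPT

/-- `f` splits, with respect to the preorder `R` on values, along an initial segment `L` of its
domain: `f` is monotone on `L` and off `L`, and the values off `L` are below those on `L`. -/
def HasCut (R : ℕ → ℕ → Prop) (f : PTrans) : Prop :=
  ∃ L : ℕ → Prop, ∀ x y u v, f x = some u → f y = some v → x ≤ y →
    (L y → L x) ∧ ((L x ↔ L y) → R u v) ∧ (L x → ¬ L y → R v u)

theorem mem_domSet {f : PTrans} {x : ℕ} : x ∈ domSet f ↔ f x = some (val f x) := by
  unfold domSet val
  cases h : f x <;> simp [h]

theorem cycSucc_of_lt {D : Set ℕ} {a b : ℕ} (hb : b ∈ D) (hab : a < b) :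
    cycSucc D a ∈ D ∧ a < cycSucc D a ∧ cycSucc D a ≤ b := by
  have hne : {x ∈ D | a < x}.Nonempty := ⟨b, hb, hab⟩
  have hmem := Nat.sInf_mem hne
  rw [cycSucc, if_pos hne]
  exact ⟨hmem.1, hmem.2, Nat.sInf_le ⟨hb, hab⟩⟩

theorem cycSucc_of_forall_le {D : Set ℕ} {a b : ℕ} (ha : ∀ x ∈ D, x ≤ a) (hb : b ∈ D) :
    cycSucc D a ∈ D ∧ cycSucc D a ≤ b := by
  have hne : ¬ {x ∈ D | a < x}.Nonempty := by
    rintro ⟨x, hx, hax⟩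
    exact absurd (ha x hx) (by omega)
  rw [cycSucc, if_neg hne]
  exact ⟨Nat.sInf_mem ⟨b, hb⟩, Nat.sInf_le hb⟩

section Cut

variable {R : ℕ → ℕ → Prop} {f : PTrans}

theorem rel_of_forall_rel_cycSucc (hrefl : ∀ a, R a a) (htrans : ∀ a b c, R a b → R b c → R a c)
    (k : ℕ) : ∀ x y, x ∈ domSet f → y ∈ domSet f → x ≤ y → y - x ≤ k →
      (∀ a ∈ domSet f, x ≤ a → a < y → R (val f a) (val f (cycSucc (domSet f) a))) →
      R (val f x) (val f y) := by
  induction k with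
  | zero =>
    intro x y _ _ hxy hk _
    obtain rfl : x = y := by omega
    exact hrefl _
  | succ k ih =>
    intro x y hx hy hxy hk h
    rcases hxy.eq_or_lt with rfl | hlt
    · exact hrefl _
    · obtain ⟨hs, hxs, hsy⟩ := cycSucc_of_lt hy hlt
      exact htrans _ _ _ (h x hx le_rfl hlt)
        (ih _ y hs hy hsy (by omega) fun a ha hsa hay => h a ha (by omega) hay)

theorem hasCut_of_ncard_le_one (hrefl : ∀ a, R a a) (htrans : ∀ a b c, R a b → R b c → R a c)
    (hfin : (domSet f).Finite)
    (h : {a ∈ domSet f | ¬ R (val f a) (val f (cycSucc (domSet f) a))}.ncard ≤ 1) :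
    HasCut R f := by
  have hsub := (Set.ncard_le_one (hfin.subset (Set.sep_subset _ _))).1 h
  have mono := rel_of_forall_rel_cycSucc (f := f) hrefl htrans
  have key : ∀ x u, f x = some u → x ∈ domSet f ∧ val f x = u := by
    intro x u hx
    exact ⟨by simp [domSet, hx], by simp [val, hx]⟩
  by_cases hne : ∃ a ∈ domSet f, ¬ R (val f a) (val f (cycSucc (domSet f) a))
  · obtain ⟨a, ha, hbad⟩ := hne
    have good : ∀ b ∈ domSet f, b ≠ a → R (val f b) (val f (cycSucc (domSet f) b)) := by
      intro b hb hba
      by_contra hc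
      exact hba (hsub b ⟨hb, hc⟩ a ⟨ha, hbad⟩)
    refine ⟨fun x => x ≤ a, fun x y u v hx hy hxy => ?_⟩
    obtain ⟨hxd, rfl⟩ := key x u hx
    obtain ⟨hyd, rfl⟩ := key y v hy
    refine ⟨fun h => hxy.trans h, fun hiff => ?_, fun hxa hya => ?_⟩
    · refine mono _ x y hxd hyd hxy le_rfl fun b hb hxb hby => good b hb ?_
      rintro rfl
      exact absurd (hiff.1 hxb) (by omega)
    · obtain ⟨m, hm, hmax⟩ := hfin.exists_maximalFor id _ ⟨a, ha⟩
      have hmax' : ∀ z ∈ domSet f, z ≤ m := fun z hz => by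
        by_contra hc
        exact hc (hmax hz (by simp only [id]; omega))
      obtain ⟨hsd, hsx⟩ := cycSucc_of_forall_le hmax' hxd
      have hym := hmax' y hyd
      refine htrans _ _ _ (mono _ y m hyd hm hym le_rfl fun b hb hyb _ => good b hb (by omega)) ?_
      refine htrans _ _ _ (good m hm (by omega)) ?_
      exact mono _ _ x hsd hxd hsx le_rfl fun b hb _ hbx => good b hb (by omega)
  · push Not at hne
    refine ⟨fun _ => True, fun x y u v hx hy hxy => ?_⟩
    obtain ⟨hxd, rfl⟩ := key x u hx
    obtain ⟨hyd, rfl⟩ := key y v hy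
    exact ⟨fun _ => trivial, fun _ => mono _ x y hxd hyd hxy le_rfl fun b hb _ _ => hne b hb,
      fun _ h => absurd trivial h⟩

theorem HasCut.ncard_le_one (hfin : (domSet f).Finite) (h : HasCut R f) :
    {a ∈ domSet f | ¬ R (val f a) (val f (cycSucc (domSet f) a))}.ncard ≤ 1 := by
  obtain ⟨L, hL⟩ := h
  have no_lt : ∀ a b, a ∈ domSet f → b ∈ domSet f → a < b →
      ¬ R (val f a) (val f (cycSucc (domSet f) a)) →
      R (val f b) (val f (cycSucc (domSet f) b)) := by
    intro a b ha hb hab hbad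
    obtain ⟨hs, has, hsb⟩ := cycSucc_of_lt hb hab
    have h1 := hL _ _ _ _ (mem_domSet.1 ha) (mem_domSet.1 hs) has.le
    have h2 := hL _ _ _ _ (mem_domSet.1 hs) (mem_domSet.1 hb) hsb
    have hLa : L a := by grind
    have hLb : ¬ L b := by grind
    by_cases hc : ∃ c ∈ domSet f, b < c
    · obtain ⟨c, hc, hbc⟩ := hc
      obtain ⟨ht, hbt, -⟩ := cycSucc_of_lt hc hbc
      have h3 := hL _ _ _ _ (mem_domSet.1 hb) (mem_domSet.1 ht) hbt.le
      grind
    · push Not at hc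
      obtain ⟨ht, hta⟩ := cycSucc_of_forall_le hc ha
      have h3 := hL _ _ _ _ (mem_domSet.1 ht) (mem_domSet.1 ha) hta
      have h4 := hL _ _ _ _ (mem_domSet.1 ht) (mem_domSet.1 hb) (hta.trans hab.le)
      grind
  rw [Set.ncard_le_one (hfin.subset (Set.sep_subset _ _))]
  rintro a ⟨ha, hbada⟩ b ⟨hb, hbadb⟩
  rcases lt_trichotomy a b with h | h | h
  · exact absurd (no_lt a b ha hb h hbada) hbadb
  · exact h
  · exact absurd (no_lt b a hb ha h hbadb) hbada

end Cut

theorem orientPres_iff_hasCut {f : PTrans} (hfin : (domSet f).Finite) :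
    OrientPres f ↔ HasCut (· ≤ ·) f := by
  have h : descents f =
      {a ∈ domSet f | ¬ val f a ≤ val f (cycSucc (domSet f) a)} := by
    simp only [descents, not_le]
  rw [OrientPres, h]
  exact ⟨hasCut_of_ncard_le_one le_refl (fun _ _ _ => le_trans) hfin, HasCut.ncard_le_one hfin⟩

theorem orientRev_iff_hasCut {f : PTrans} (hfin : (domSet f).Finite) :
    OrientRev f ↔ HasCut (· ≥ ·) f := by
  have h : ascents f =
      {a ∈ domSet f | ¬ val f a ≥ val f (cycSucc (domSet f) a)} := by
    simp only [ascents, not_le, ge_iff_le]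
  rw [OrientRev, h]
  exact ⟨hasCut_of_ncard_le_one le_refl (fun _ _ _ h₁ h₂ => le_trans h₂ h₁) hfin,
    HasCut.ncard_le_one hfin⟩

theorem IsPT.finite_domSet {n : ℕ} {f : PTrans} (h : IsPT n f) : (domSet f).Finite :=
  (Set.finite_Icc 1 n).subset h.1

theorem IsPT.oriented_iff {n : ℕ} {f : PTrans} (h : IsPT n f) :
    Oriented f ↔ HasCut (· ≤ ·) f ∨ HasCut (· ≥ ·) f := by
  rw [Oriented, orientPres_iff_hasCut h.finite_domSet, orientRev_iff_hasCut h.finite_domSet]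

theorem mul_eq_some {f g : PTrans} {x z : ℕ} :
    (f * g) x = some z ↔ ∃ y, f x = some y ∧ g y = some z := by
  exact Option.bind_eq_some_iff

theorem HasCut.le_mul {S : ℕ → ℕ → Prop} {f g : PTrans}
    (hf : HasCut (· ≤ ·) f) (hg : HasCut S g) : HasCut S (f * g) := by
  obtain ⟨L, hL⟩ := hf
  obtain ⟨M, hM⟩ := hg
  by_cases hB : ∃ x u w, f x = some u ∧ g u = some w ∧ ¬ L x ∧ ¬ M u
  · obtain ⟨z, c, w, hzc, hcw, hLz, hMc⟩ := hB
    have hLM : ∀ x a u, f x = some a → g a = some u → L x → ¬ M a := by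
      intro x a u hxa hau hLx
      have h1 := hL x z a c hxa hzc
      have h2 := hL z x c a hzc hxa
      have h3 := hM c a w u hcw hau
      have h4 := hM a c u w hau hcw
      have h5 := le_total x z
      grind
    refine ⟨fun x => L x ∨ ∀ u, f x = some u → M u, fun x y u v hx hy hxy => ?_⟩
    obtain ⟨a, hxa, hau⟩ := mul_eq_some.1 hx
    obtain ⟨b, hyb, hbv⟩ := mul_eq_some.1 hy
    have h1 := hL x y a b hxa hyb hxy
    have h2 := hM a b u v hau hbv
    have h3 := hM b a v u hbv hau
    have h4 := hLM x a u hxa hau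
    have h5 := hLM y b v hyb hbv
    simp only [hxa, hyb, Option.some.injEq, forall_eq']
    rcases le_total a b with hab | hab <;> grind
  · have hLM : ∀ x a u, f x = some a → g a = some u → ¬ L x → M a := by
      grind
    refine ⟨fun x => L x ∧ ∀ u, f x = some u → M u, fun x y u v hx hy hxy => ?_⟩
    obtain ⟨a, hxa, hau⟩ := mul_eq_some.1 hx
    obtain ⟨b, hyb, hbv⟩ := mul_eq_some.1 hy
    have h1 := hL x y a b hxa hyb hxy
    have h2 := hM a b u v hau hbv
    have h3 := hM b a v u hbv hau
    have h4 := hLM x a u hxa hau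
    have h5 := hLM y b v hyb hbv
    simp only [hxa, hyb, Option.some.injEq, forall_eq']
    rcases le_total a b with hab | hab <;> grind

theorem HasCut.ge_mul {S T : ℕ → ℕ → Prop} (hST : ∀ a b, S a b ↔ T b a) {f g : PTrans}
    (hf : HasCut (· ≥ ·) f) (hg : HasCut S g) : HasCut T (f * g) := by
  obtain ⟨L, hL⟩ := hf
  obtain ⟨M, hM⟩ := hg
  by_cases hB : ∃ x u w, f x = some u ∧ g u = some w ∧ ¬ L x ∧ M u
  · obtain ⟨z, c, w, hzc, hcw, hLz, hMc⟩ := hB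
    have hLM : ∀ x a u, f x = some a → g a = some u → L x → M a := by
      intro x a u hxa hau hLx
      have h1 := hL x z a c hxa hzc
      have h2 := hL z x c a hzc hxa
      have h3 := hM c a w u hcw hau
      have h4 := hM a c u w hau hcw
      have h5 := le_total x z
      grind
    refine ⟨fun x => L x ∨ ∀ u, f x = some u → ¬ M u, fun x y u v hx hy hxy => ?_⟩
    obtain ⟨a, hxa, hau⟩ := mul_eq_some.1 hx
    obtain ⟨b, hyb, hbv⟩ := mul_eq_some.1 hy
    have h1 := hL x y a b hxa hyb hxy
    have h2 := hM a b u v hau hbv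
    have h3 := hM b a v u hbv hau
    have h4 := hLM x a u hxa hau
    have h5 := hLM y b v hyb hbv
    simp only [hxa, hyb, Option.some.injEq, forall_eq']
    rcases le_total a b with hab | hab <;> grind
  · have hLM : ∀ x a u, f x = some a → g a = some u → ¬ L x → ¬ M a := by
      grind
    refine ⟨fun x => L x ∧ ∀ u, f x = some u → ¬ M u, fun x y u v hx hy hxy => ?_⟩
    obtain ⟨a, hxa, hau⟩ := mul_eq_some.1 hx
    obtain ⟨b, hyb, hbv⟩ := mul_eq_some.1 hy
    have h1 := hL x y a b hxa hyb hxy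
    have h2 := hM a b u v hau hbv
    have h3 := hM b a v u hbv hau
    have h4 := hLM x a u hxa hau
    have h5 := hLM y b v hyb hbv
    simp only [hxa, hyb, Option.some.injEq, forall_eq']
    rcases le_total a b with hab | hab <;> grind

theorem IsPT.mul {n : ℕ} {f g : PTrans} (hf : IsPT n f) (hg : IsPT n g) : IsPT n (f * g) := by
  constructor
  · intro x hx
    apply hf.1
    intro h
    exact hx (by rw [mul_apply, h]; rfl)
  · rintro z ⟨x, hx⟩
    obtain ⟨y, -, hy⟩ := mul_eq_some.1 hx
    exact hg.2 ⟨y, hy⟩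

theorem IsPT.finite_im {n : ℕ} {f : PTrans} (h : IsPT n f) : (im f).Finite :=
  (Set.finite_Icc 1 n).subset h.2

theorem mul_mem_PORDr {n r : ℕ} {f g : PTrans} (hf : f ∈ PORDr n r) (hg : g ∈ PORDr n r) :
    f * g ∈ PORDr n r := by
  obtain ⟨⟨hf1, hf2, hf3⟩, -⟩ := hf
  obtain ⟨⟨hg1, hg2, hg3⟩, hg4⟩ := hg
  refine ⟨⟨hf1.mul hg1, ?_, ?_⟩, (Set.ncard_le_ncard ?_ hg1.finite_im).trans hg4⟩
  · rw [(hf1.mul hg1).oriented_iff]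
    rw [hf1.oriented_iff] at hf2
    rw [hg1.oriented_iff] at hg2
    rcases hf2 with hf2 | hf2 <;> rcases hg2 with hg2 | hg2
    · exact Or.inl (hf2.le_mul hg2)
    · exact Or.inr (hf2.le_mul hg2)
    · exact Or.inr (hf2.ge_mul (fun _ _ => Iff.rfl) hg2)
    · exact Or.inl (hf2.ge_mul (fun _ _ => Iff.rfl) hg2)
  · intro x z hz
    obtain ⟨y, hxy, hyz⟩ := mul_eq_some.1 hz
    exact (hg3 y z hyz).trans (hf3 x y hxy)
  · rintro z ⟨x, hx⟩
    obtain ⟨y, -, hy⟩ := mul_eq_some.1 hx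
    exact ⟨y, hy⟩

theorem restrict_eq_xi_iff {f : PTrans} {p q : ℕ} (hpq : p ≤ q) :
    restrict f (Set.Icc p (q + 1)) = xi p q ↔
      ∀ x, p ≤ x → x ≤ q + 1 → f x = some (if x = q + 1 then p else x) := by
  constructor
  · intro h x hpx hxq
    have hx := congrFun h x
    simp only [restrict, xi, Set.mem_Icc] at hx
    grind
  · intro h
    funext x
    have hx := h x
    simp only [restrict, xi, Set.mem_Icc]
    grind

theorem mem_PORDr_of_im_subset {n r a b : ℕ} {f : PTrans} (hdom : domSet f ⊆ Set.Icc 1 n)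
    (him : im f ⊆ Set.Icc a b) (ha : 1 ≤ a) (hb : b ≤ n) (hr : b + 1 - a ≤ r)
    (hcut : HasCut (· ≤ ·) f) (hdecr : OrderDecr f) : f ∈ PORDr n r := by
  have hPT : IsPT n f := ⟨hdom, him.trans (Set.Icc_subset_Icc ha hb)⟩
  refine ⟨⟨hPT, hPT.oriented_iff.2 (Or.inl hcut), hdecr⟩, ?_⟩
  refine (Set.ncard_le_ncard him (Set.finite_Icc a b)).trans ?_
  rw [← Finset.coe_Icc, Set.ncard_coe_finset, Nat.card_Icc]
  exact hr

theorem xi_mem_Frestr {n r p q : ℕ} (hp : 1 ≤ p) (hpq : p ≤ q) (hqn : q + 1 ≤ n)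
    (hr : q + 2 ≤ p + r) : xi p q ∈ Frestr n r p q := by
  refine ⟨mem_PORDr_of_im_subset (a := p) (b := q) ?_ ?_ hp (by omega) (by omega)
    ⟨fun x => x ≤ q, ?_⟩ ?_, ?_⟩
  · intro x hx
    simp only [domSet, xi, Set.mem_ofPred_eq, Set.mem_Icc] at hx ⊢
    grind
  · rintro y ⟨x, hx⟩
    simp only [xi, Set.mem_Icc] at hx ⊢
    grind
  · intro x y u v hx hy hxy
    simp only [xi] at hx hy
    grind
  · intro x y hx
    simp only [xi] at hx
    grind
  · rw [restrict_eq_xi_iff hpq]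
    intro x hpx hxq
    simp only [xi]
    grind

open scoped Classical in
/-- The map fixing `[p, m]` pointwise and sending the points of `D` above `m` to `m`. -/
noncomputable def collapseAbove (p m : ℕ) (D : Set ℕ) : PTrans := fun x =>
  if p ≤ x ∧ x ≤ m then some x else if m < x ∧ x ∈ D then some m else none

theorem collapseAbove_mem_PORDr {n r p m : ℕ} {D : Set ℕ} (hp : 1 ≤ p) (hpm : p ≤ m)
    (hmn : m ≤ n) (hr : m + 1 ≤ p + r) (hD : D ⊆ Set.Icc 1 n) :
    collapseAbove p m D ∈ PORDr n r := by
  refine mem_PORDr_of_im_subset (a := p) (b := m) ?_ ?_ hp hmn (by omega)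
    ⟨fun _ => True, ?_⟩ ?_
  · intro x hx
    have := @hD x
    simp only [domSet, collapseAbove, Set.mem_ofPred_eq, Set.mem_Icc] at hx this ⊢
    grind
  · rintro y ⟨x, hx⟩
    simp only [collapseAbove, Set.mem_Icc] at hx ⊢
    grind
  · intro x y u v hx hy hxy
    simp only [collapseAbove] at hx hy
    grind
  · intro x y hx
    simp only [collapseAbove] at hx
    grind

theorem collapseAbove_notMem_Frestr {n r p q : ℕ} {D : Set ℕ} (hpq : p ≤ q) :
    collapseAbove p (q + 1) D ∉ Frestr n r p q := by
  rintro ⟨-, h⟩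
  have h1 := (restrict_eq_xi_iff hpq).1 h (q + 1) (by omega) le_rfl
  simp only [collapseAbove] at h1
  grind

theorem eq_of_mem_Frestr {n r p q : ℕ} {f : PTrans} (hpq : p < q) (hf : f ∈ Frestr n r p q)
    {x u : ℕ} (hx : f x = some u) (hxpq : x < p ∨ q + 1 < x) : q + 1 < x ∧ u = p := by
  obtain ⟨⟨⟨hPT, hor, hdecr⟩, -⟩, hres⟩ := hf
  rw [restrict_eq_xi_iff hpq.le] at hres
  have hfp : f p = some p := by simpa [show p ≠ q + 1 by omega] using hres p le_rfl (by omega)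
  have hfq : f q = some q := by simpa using hres q hpq.le (by omega)
  have hfq1 : f (q + 1) = some p := by simpa using hres (q + 1) (by omega) le_rfl
  have hux := hdecr x u hx
  rw [hPT.oriented_iff] at hor
  rcases hor with ⟨L, hL⟩ | ⟨L, hL⟩
  all_goals
    have h1 := hL _ _ _ _ hfp hfq hpq.le
    have h2 := hL _ _ _ _ hfq hfq1 (by omega)
    have h3 := hL _ _ _ _ hfp hfq1 (by omega)
    rcases hxpq with hlt | hlt
    · have h4 := hL _ _ _ _ hx hfp hlt.le
      have h5 := hL _ _ _ _ hx hfq1 (by omega)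
      grind
    · have h4 := hL _ _ _ _ hfp hx (by omega)
      have h5 := hL _ _ _ _ hfq1 hx hlt.le
      grind

theorem collapseAbove_mul_of_mem_Frestr {n r p q : ℕ} {f : PTrans} (hf : f ∈ Frestr n r p q) :
    collapseAbove p (q + 1) ∅ * f = xi p q := by
  rw [← hf.2]
  funext x
  simp only [mul_apply, collapseAbove, restrict, Set.mem_Icc]
  grind

theorem collapseAbove_mul_xi {n r p q : ℕ} {f : PTrans} (hpq : p < q)
    (hf : f ∈ Frestr n r p q) : collapseAbove p (q + 1) (domSet f) * xi p q = f := by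
  funext x
  have hx := fun u => eq_of_mem_Frestr (x := x) (u := u) hpq hf
  have hres := (restrict_eq_xi_iff hpq.le).1 hf.2 x
  simp only [mul_apply, collapseAbove, domSet, Set.mem_ofPred_eq]
  rcases Option.eq_none_or_eq_some (f x) with h | ⟨u, h⟩ <;> grind [xi]

theorem mem_Frestr_or_of_mul_mem {n r p q : ℕ} {f g : PTrans} (hf : f ∈ PORDr n r)
    (hg : g ∈ PORDr n r) (hpq : p ≤ q) (h : f * g ∈ Frestr n r p q) :
    f ∈ Frestr n r p q ∨ g ∈ Frestr n r p q := by
  have hres := (restrict_eq_xi_iff hpq).1 h.2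
  have hfix : ∀ x, p ≤ x → x ≤ q → f x = some x ∧ g x = some x := by
    intro x hpx hxq
    have hx := hres x hpx (by omega)
    rw [if_neg (by omega)] at hx
    obtain ⟨y, hxy, hyx⟩ := mul_eq_some.1 hx
    obtain rfl : y = x := le_antisymm (hf.1.2.2 x y hxy) (hg.1.2.2 y x hyx)
    exact ⟨hxy, hyx⟩
  have hq := hres (q + 1) (by omega) le_rfl
  rw [if_pos rfl] at hq
  obtain ⟨y, hqy, hyp⟩ := mul_eq_some.1 hq
  have hyq := hf.1.2.2 _ _ hqy
  have hpy := hg.1.2.2 _ _ hyp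
  by_cases hyq1 : y = q + 1
  · right
    refine ⟨hg, (restrict_eq_xi_iff hpq).2 fun x hpx hxq => ?_⟩
    have := hfix x hpx
    grind
  · left
    refine ⟨hf, (restrict_eq_xi_iff hpq).2 fun x hpx hxq => ?_⟩
    have := hfix x hpx
    have := hfix y hpy
    grind

end OrientedPT

open OrientedPT in
/-- For `n ≥ 4`, `n − ⌊n/3⌋ ≤ r ≤ n−1`, `1 ≤ p ≤ n−2` and
`p+1 ≤ q ≤ p+r−2 ≤ n−1`, the set `PORD(n,r) \ F^r_{p,q}` is a maximal
subsemigroup of `PORD(n,r)`. -/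
theorem maximal_minus_Frestr (n r p q : ℕ) (hn : 4 ≤ n) (hr1 : n - n / 3 ≤ r)
    (hr2 : r ≤ n - 1) (hp : 1 ≤ p) (hpn : p + 2 ≤ n) (hq1 : p + 1 ≤ q)
    (hq2 : q + 2 ≤ p + r) (hq3 : p + r ≤ n + 1) :
    IsMaximalSubsemigroup (PORDr n r) (PORDr n r \ Frestr n r p q) := by
  have hpq : p < q := hq1
  refine ⟨⟨Set.sdiff_subset, fun a ha b hb => ⟨mul_mem_PORDr ha.1 hb.1, fun h => ?_⟩⟩, ?_, ?_⟩
  · exact (mem_Frestr_or_of_mul_mem ha.1 hb.1 hpq.le h).elim ha.2 hb.2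
  · intro h
    have hxi : xi p q ∈ Frestr n r p q := xi_mem_Frestr hp hpq.le (by omega) hq2
    have hmem := hxi.1
    rw [← h] at hmem
    exact hmem.2 hxi
  · intro U hU hne hTU
    refine hTU.antisymm fun f hfU => ⟨hU.1 hfU, fun hfF => hne (hU.1.antisymm fun g hg => ?_)⟩
    have hcol : ∀ D ⊆ Set.Icc 1 n, collapseAbove p (q + 1) D ∈ U := fun D hD =>
      hTU ⟨collapseAbove_mem_PORDr hp (by omega) (by omega) (by omega) hD,
        collapseAbove_notMem_Frestr hpq.le⟩
    by_cases hgF : g ∈ Frestr n r p q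
    · rw [← collapseAbove_mul_xi hpq hgF, ← collapseAbove_mul_of_mem_Frestr hfF]
      exact hU.2 _ (hcol _ hg.1.1.1) _ (hU.2 _ (hcol _ (Set.empty_subset _)) _ hfU)
    · exact hTU ⟨hg, hgF⟩
end
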